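/- arXiv:math/0412160 — 3 statements merged into one kernel-verified Lean document; each statement's English description precedes it below -/
import Mathlib

section
/- Let X be a real Banach space, L : X → X a continuous linear operator with operator norm λ < 1, γ > 0, and B : X × X → X a bilinear map with ‖B(x,y)‖ ≤ γ‖x‖‖y‖ for all x,y. Let y ∈ X satisfy 4γ‖y‖ < (1−λ)². Define the sequence X₀ = 0, X_{n+1} = y + L(Xₙ) + B(Xₙ,Xₙ). Then (Xₙ) converges in X to an element x satisfying x = y + L(x) + B(x,x) and 2γ‖x‖ < 1−λ; x is the unique solution of this equation satisfying 2γ‖x‖ < 1−λ; and moreover ‖x‖ ≤ 2‖y‖/(1−λ). -/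
/-!
Put `T x = y + L x + B x x` and `R = 2‖y‖ / (1 - ‖L‖)`. Expanding `B a a - B b b` gives
`‖T a - T b‖ ≤ (‖L‖ + γ (‖a‖ + ‖b‖)) ‖a - b‖` (`norm_quad_sub_le`). The hypothesis on `y` says
exactly that `2 γ R < 1 - ‖L‖`, so `T` maps the closed ball of radius `R` into itself and contracts
it with ratio `‖L‖ + 2 γ R < 1`; hence the Picard iterates converge to a fixed point in that ball.
Two fixed points `x`, `x'` with `2 γ ‖x‖, 2 γ ‖x'‖ < 1 - ‖L‖` coincide, since the same estimate
bounds `‖x' - x‖` by a factor `< 1` times itself.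
-/

open Filter Topology

theorem norm_quad_sub_le {X : Type*} [NormedAddCommGroup X] [NormedSpace ℝ X]
    (L : X →L[ℝ] X) {γ : ℝ} {B : X →ₗ[ℝ] X →ₗ[ℝ] X}
    (hB : ∀ x y : X, ‖B x y‖ ≤ γ * ‖x‖ * ‖y‖) (y a b : X) :
    ‖(y + L a + B a a) - (y + L b + B b b)‖ ≤ (‖L‖ + γ * (‖a‖ + ‖b‖)) * ‖a - b‖ := by
  have e : (y + L a + B a a) - (y + L b + B b b) = L (a - b) + B (a - b) a + B b (a - b) := by
    simp only [map_sub, LinearMap.sub_apply]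
    abel
  rw [e]
  refine norm_add₃_le.trans ?_
  linarith [L.le_opNorm (a - b), hB (a - b) a, hB b (a - b)]

/-- Fixed point theorem: existence, uniqueness and estimate for the solution of
`x = y + L x + B(x,x)` with `‖L‖ = λ < 1`, `‖B(x,y)‖ ≤ γ‖x‖‖y‖` and
`4γ‖y‖ < (1−λ)²`, as the limit of the Picard iterates. -/
theorem stmt15 {X : Type*} [NormedAddCommGroup X] [NormedSpace ℝ X] [CompleteSpace X]
    (L : X →L[ℝ] X) (hL : ‖L‖ < 1)
    (γ : ℝ) (hγ : 0 < γ)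
    (B : X →ₗ[ℝ] X →ₗ[ℝ] X) (hB : ∀ x y : X, ‖B x y‖ ≤ γ * ‖x‖ * ‖y‖)
    (y : X) (hy : 4 * γ * ‖y‖ < (1 - ‖L‖) ^ 2)
    (seq : ℕ → X) (h0 : seq 0 = 0)
    (hrec : ∀ n, seq (n + 1) = y + L (seq n) + B (seq n) (seq n)) :
    ∃ x : X, Filter.Tendsto seq Filter.atTop (𝓝 x) ∧
      x = y + L x + B x x ∧
      2 * γ * ‖x‖ < 1 - ‖L‖ ∧
      (∀ x' : X, x' = y + L x' + B x' x' → 2 * γ * ‖x'‖ < 1 - ‖L‖ → x' = x) ∧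
      ‖x‖ ≤ 2 * ‖y‖ / (1 - ‖L‖) := by
  set l := ‖L‖ with hl
  have hd : 0 < 1 - l := by linarith
  have hl0 : 0 ≤ l := norm_nonneg L
  have hdiff := norm_quad_sub_le L hB y
  set R := 2 * ‖y‖ / (1 - l) with hR
  have hR0 : 0 ≤ R := by positivity
  have hyR : 2 * ‖y‖ = R * (1 - l) := by rw [hR]; field_simp
  have hRs : 2 * γ * R < 1 - l := by
    refine lt_of_mul_lt_mul_right ?_ hd.le
    linear_combination hy - 2 * γ * hyR
  have hb : ∀ n, ‖seq n‖ ≤ R := by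
    intro n
    induction n with
    | zero => simpa [h0] using hR0
    | succ n ih =>
      have h1 : ‖L (seq n)‖ ≤ l * R := (L.le_opNorm _).trans (by gcongr)
      have h2 : ‖B (seq n) (seq n)‖ ≤ γ * R * R := (hB _ _).trans (by gcongr)
      have h3 : 2 * γ * R * R ≤ (1 - l) * R := by gcongr
      rw [hrec]
      refine norm_add₃_le.trans ?_
      linarith
  set K := l + 2 * γ * R with hK
  have hK0 : 0 ≤ K := by positivity
  have hK1 : K < 1 := by linarith
  have hcontr : ∀ a b : X, ‖a‖ ≤ R → ‖b‖ ≤ R →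
      ‖(y + L a + B a a) - (y + L b + B b b)‖ ≤ K * ‖a - b‖ := by
    intro a b ha hb'
    refine (hdiff a b).trans (mul_le_mul_of_nonneg_right ?_ (norm_nonneg _))
    have : γ * (‖a‖ + ‖b‖) ≤ γ * (R + R) := by gcongr
    linarith
  have hcau : CauchySeq seq := by
    refine cauchySeq_of_le_geometric K ‖seq 0 - seq 1‖ hK1 fun n => ?_
    rw [dist_eq_norm]
    induction n with
    | zero => simp
    | succ n ih =>
      have h := hcontr _ _ (hb n) (hb (n + 1))
      rw [← hrec, ← hrec] at h
      calc _ ≤ K * ‖seq n - seq (n + 1)‖ := h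
        _ ≤ K * (‖seq 0 - seq 1‖ * K ^ n) := by gcongr
        _ = _ := by ring
  obtain ⟨x, hx⟩ := cauchySeq_tendsto_of_complete hcau
  have hxR : ‖x‖ ≤ R := le_of_tendsto' hx.norm hb
  have hfix : x = y + L x + B x x := by
    refine tendsto_nhds_unique (hx.comp (tendsto_add_atTop_nat 1)) ?_
    rw [tendsto_iff_norm_sub_tendsto_zero]
    refine squeeze_zero (g := fun n => K * ‖seq n - x‖) (fun _ => norm_nonneg _) (fun n => ?_) ?_
    · simpa only [Function.comp, hrec] using hcontr _ _ (hb n) hxR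
    · simpa using (tendsto_iff_norm_sub_tendsto_zero.1 hx).const_mul K
  have hxs : 2 * γ * ‖x‖ < 1 - l :=
    lt_of_le_of_lt (by gcongr) hRs
  refine ⟨x, hx, hfix, hxs, fun x' hx' hs => ?_, hxR⟩
  have h := hdiff x' x
  rw [← hx', ← hfix] at h
  by_contra hne
  have hpos : 0 < ‖x' - x‖ := norm_pos_iff.2 (sub_ne_zero.2 hne)
  have hlt : l + γ * (‖x'‖ + ‖x‖) < 1 := by linarith
  have := mul_lt_mul_of_pos_right hlt hpos
  linarith
end

section
/- Let X be a real Banach space, L : X → X linear with operator norm λ < 1, B : X × X → X bilinear with ‖B(x,y)‖_X ≤ γ‖x‖_X‖y‖_X (γ > 0), and y ∈ X with 4γ‖y‖_X < (1−λ)². Let Y ⊆ X be a linear subspace which is a Banach space under a norm ‖·‖_Y with continuous inclusion Y ↪ X, such that y ∈ Y, L maps Y to Y with ‖L(g)‖_Y ≤ μ‖g‖_Y where μ < 1, and there is κ > 0 with ‖B(f,g)‖_Y ≤ κ‖f‖_X‖g‖_Y and ‖B(g,f)‖_Y ≤ κ‖f‖_X‖g‖_Y for all f ∈ X, g ∈ Y.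 Assume κ(1−λ) < (1−μ)γ. Then the iterates X₀ = 0, X_{n+1} = y + L(Xₙ) + B(Xₙ,Xₙ) all lie in Y, converge in the Y-norm to the fixed point x (so in particular x ∈ Y), and there is a constant C depending only on λ, μ, γ, κ such that ‖x‖_Y ≤ C‖y‖_Y. -/
/-!
Since `4γ‖y‖_X < (1-λ)²`, the ball of radius `(1-λ)/(2γ)` in `X` is invariant under the iteration
(`picard_norm_le`). Lifted to `Y`, the iterates `Yₙ` have increments `dₙ = Yₙ₊₁ - Yₙ` satisfying
`dₙ₊₁ = L dₙ + B(Xₙ₊₁, dₙ) + B(dₙ, Xₙ)`, so each of the two bilinear terms costs at most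
`κ(1-λ)/(2γ)` and `‖dₙ₊₁‖_Y ≤ θ ‖dₙ‖_Y` with `θ = μ + κ(1-λ)/γ < 1`. As `d₀ = y`, the series of
increments is dominated by a geometric one, which gives convergence in `Y` and the bound with
`C = 1/(1-θ)`. The limit is a fixed point by continuity of `L` and `B` on `X`.
-/

open Filter Topology

/-- The Picard iterates stay in the closed ball of radius `(1-λ)/(2γ)`, the maximiser of
`r ↦ (1-λ)r - γr²`, whose maximum `(1-λ)²/(4γ)` exceeds the norm of the datum. -/
lemma picard_norm_le {X : Type*} [NormedAddCommGroup X] [NormedSpace ℝ X]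
    {lam γ : ℝ} (hlam : lam < 1) (hγ : 0 < γ)
    (L : X →L[ℝ] X) (hL : ‖L‖ = lam) (B : X →ₗ[ℝ] X →ₗ[ℝ] X)
    (hB : ∀ a b : X, ‖B a b‖ ≤ γ * ‖a‖ * ‖b‖) (y : X) (hy : 4 * γ * ‖y‖ < (1 - lam) ^ 2)
    (seq : ℕ → X) (h0 : seq 0 = 0)
    (hs : ∀ n, seq (n + 1) = y + L (seq n) + B (seq n) (seq n)) (n : ℕ) :
    ‖seq n‖ ≤ (1 - lam) / (2 * γ) := by
  have hl0 : 0 ≤ lam := hL ▸ norm_nonneg L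
  have hM : 0 ≤ (1 - lam) / (2 * γ) := div_nonneg (by linarith) (by positivity)
  induction n with
  | zero => simpa [h0] using hM
  | succ n ih =>
    set M := (1 - lam) / (2 * γ) with hMdef
    have hMγ : 2 * γ * M = 1 - lam := by rw [hMdef]; field_simp
    have h1 : ‖L (seq n)‖ ≤ lam * M :=
      (L.le_opNorm _).trans (by rw [hL]; gcongr)
    have h2 : ‖B (seq n) (seq n)‖ ≤ γ * M * M := (hB _ _).trans (by gcongr)
    have h3 : ‖y‖ ≤ γ * M * M := by
      rw [← hMγ] at hy
      have : 4 * γ * ‖y‖ ≤ 4 * γ * (γ * M * M) := by linarith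
      exact le_of_mul_le_mul_left this (by positivity)
    have h4 : lam * M + 2 * γ * M * M = M := by rw [hMγ]; ring
    rw [hs]
    linarith [norm_add₃_le (a := y) (b := L (seq n)) (c := B (seq n) (seq n))]

/-- Propagation of regularity for the fixed point iteration: if the data `y` lies in a
Banach subspace `Y ↪ X` (encoded by an injective continuous linear map `j`) on which `L`
and `B` restrict with norms `μ < 1` and `κ` satisfying `κ(1−λ) < (1−μ)γ`, then the
Picard iterates lie in `Y`, converge in `Y` to the fixed point, and `‖x‖_Y ≤ C‖y‖_Y`
with `C` depending only on `λ, μ, γ, κ`. -/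
theorem stmt16 (lam μ γ κ : ℝ) (hlam : lam < 1) (hμ : μ < 1) (hγ : 0 < γ) (hκ : 0 < κ)
    (hcomp : κ * (1 - lam) < (1 - μ) * γ) :
    ∃ C : ℝ, 0 < C ∧
      ∀ (X : Type) (Y : Type),
      ∀ (_ : NormedAddCommGroup X), ∀ (_ : NormedSpace ℝ X), ∀ (_ : CompleteSpace X),
      ∀ (_ : NormedAddCommGroup Y), ∀ (_ : NormedSpace ℝ Y), ∀ (_ : CompleteSpace Y),
      ∀ (j : Y →L[ℝ] X), Function.Injective j →
      ∀ (L : X →L[ℝ] X), ‖L‖ = lam →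
      ∀ (B : X →ₗ[ℝ] X →ₗ[ℝ] X), (∀ a b : X, ‖B a b‖ ≤ γ * ‖a‖ * ‖b‖) →
      ∀ (y : Y), 4 * γ * ‖j y‖ < (1 - lam) ^ 2 →
      ∀ (LY : Y →ₗ[ℝ] Y), (∀ g : Y, j (LY g) = L (j g)) → (∀ g : Y, ‖LY g‖ ≤ μ * ‖g‖) →
      ∀ (BY : X →ₗ[ℝ] Y →ₗ[ℝ] Y), (∀ (f : X) (g : Y), j (BY f g) = B f (j g)) →
        (∀ (f : X) (g : Y), ‖BY f g‖ ≤ κ * ‖f‖ * ‖g‖) →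
      ∀ (BY' : Y →ₗ[ℝ] X →ₗ[ℝ] Y), (∀ (g : Y) (f : X), j (BY' g f) = B (j g) f) →
        (∀ (g : Y) (f : X), ‖BY' g f‖ ≤ κ * ‖f‖ * ‖g‖) →
      ∀ (seq : ℕ → X), seq 0 = 0 →
        (∀ n, seq (n + 1) = j y + L (seq n) + B (seq n) (seq n)) →
      ∃ (seqY : ℕ → Y) (xY : Y),
        (∀ n, j (seqY n) = seq n) ∧
        Filter.Tendsto seqY Filter.atTop (𝓝 xY) ∧
        j xY = j y + L (j xY) + B (j xY) (j xY) ∧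
        ‖xY‖ ≤ C * ‖y‖ := by
  -- The contraction factor is truncated at `0`, because `μ` may be negative when `Y` is trivial.
  set θ : ℝ := max (μ + κ * (1 - lam) / γ) 0 with hθ
  have hθ0 : 0 ≤ θ := le_max_right _ _
  have hθ1 : θ < 1 := by
    refine max_lt ?_ one_pos
    have : κ * (1 - lam) / γ < 1 - μ := by rwa [div_lt_iff₀ hγ]
    linarith
  refine ⟨1 / (1 - θ), one_div_pos.2 (by linarith), ?_⟩
  intro X Y _ _ _ _ _ _ j hj L hL B hB y hy LY hLY hLYn BY hBY hBYn BY' hBY' hBYn' seq h0 hs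
  have hbd := picard_norm_le hlam hγ L hL B hB (j y) hy seq h0 hs
  let Z : ℕ → Y := fun n => Nat.rec 0 (fun _ z => y + LY z + BY (j z) z) n
  have hZs : ∀ n, Z (n + 1) = y + LY (Z n) + BY (j (Z n)) (Z n) := fun _ => rfl
  have hZ0 : Z 0 = 0 := rfl
  have hjZ : ∀ n, j (Z n) = seq n := by
    intro n
    induction n with
    | zero => rw [hZ0, h0, map_zero]
    | succ n ih => rw [hZs, hs, map_add, map_add, hLY, hBY, ih]
  have hd : ∀ n, Z (n + 2) - Z (n + 1) = LY (Z (n + 1) - Z n)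
      + BY (seq (n + 1)) (Z (n + 1) - Z n) + BY' (Z (n + 1) - Z n) (seq n) := by
    intro n
    apply hj
    simp only [map_add, map_sub, hLY, hBY, hBY', hjZ, LinearMap.sub_apply]
    rw [hs (n + 1), hs n]
    abel
  have hstep : ∀ n, ‖Z (n + 2) - Z (n + 1)‖ ≤ θ * ‖Z (n + 1) - Z n‖ := by
    intro n
    set d := Z (n + 1) - Z n
    have h1 : ‖BY (seq (n + 1)) d‖ ≤ κ * ((1 - lam) / (2 * γ)) * ‖d‖ :=
      (hBYn _ _).trans (by gcongr; exact hbd _)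
    have h2 : ‖BY' d (seq n)‖ ≤ κ * ((1 - lam) / (2 * γ)) * ‖d‖ :=
      (hBYn' _ _).trans (by gcongr; exact hbd _)
    have h3 : (μ + κ * (1 - lam) / γ) * ‖d‖ ≤ θ * ‖d‖ := by
      gcongr; exact le_max_left _ _
    have h4 : (μ + κ * (1 - lam) / γ) * ‖d‖
        = μ * ‖d‖ + 2 * (κ * ((1 - lam) / (2 * γ)) * ‖d‖) := by
      field_simp
    rw [hd]
    have := norm_add₃_le (a := LY d) (b := BY (seq (n + 1)) d) (c := BY' d (seq n))
    linarith [hLYn d]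
  have hgeo : ∀ n, dist (Z n) (Z (n + 1)) ≤ ‖y‖ * θ ^ n := by
    intro n
    rw [dist_comm, dist_eq_norm]
    induction n with
    | zero => simp [hZs, hZ0]
    | succ n ih =>
      calc _ ≤ θ * ‖Z (n + 1) - Z n‖ := hstep n
        _ ≤ θ * (‖y‖ * θ ^ n) := by gcongr
        _ = _ := by ring
  obtain ⟨x, hx⟩ := cauchySeq_tendsto_of_complete (cauchySeq_of_le_geometric θ ‖y‖ hθ1 hgeo)
  refine ⟨Z, x, hjZ, hx, ?_, ?_⟩
  · have hjx : Tendsto seq atTop (𝓝 (j x)) := by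
      simpa only [Function.comp_def, hjZ] using (j.continuous.tendsto x).comp hx
    let Bc : X →L[ℝ] X →L[ℝ] X := B.mkContinuous₂ γ hB
    have hcont : Continuous fun z : X => j y + L z + Bc z z := by fun_prop
    refine tendsto_nhds_unique ((tendsto_add_atTop_iff_nat 1).2 hjx) ?_
    simp only [hs]
    exact (hcont.tendsto (j x)).comp hjx
  · have := dist_le_of_le_geometric_of_tendsto₀ θ ‖y‖ hθ1 hgeo hx
    rw [hZ0, dist_zero_left] at this
    rwa [one_div_mul_eq_div]
end

section
/- The function f(x) = sin x on ℝ has finite ∂BMO norm, but does not belong to the closure of the Schwartz class in ∂BMO: there exists ε > 0 such that ‖sin − φ‖_{∂BMO} ≥ ε for every φ ∈ 𝓢(ℝ). -/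
/-!
Write `G_t` for the heat kernel. Since `sin` is an eigenfunction of the Laplacian,
`e^{tΔ} sin = e^{-t} sin` (`heatExt_sin`), so the `∂BMO` integrand is at most `e^{-2t} ≤ e^{-t}`,
whose integral over `(0, ∞)` is finite, uniformly in the centre and the radius of the ball.

For the second claim the point is that `sin` oscillates up to infinity while Schwartz functions
decay, uniformly under the heat flow for `t ≤ 1`. If `|φ z| ≤ C / (1 + |z|)`, then
`1 + |x| ≤ (1 + |x - z|) (1 + |z|)` and a Gaussian moment bound give
`|e^{tΔ} φ x| ≤ 4 C / (1 + |x|)` for `0 < t ≤ 1` (`abs_heatExt_le_of_decay`).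
On the unit ball centred at `π / 2 + 2 π n` we have `sin ≥ cos 1 ≥ 1 / 2`, hence for large `n`
`e^{tΔ}(sin - φ) ≥ e^{-1} / 4` on that ball for all `0 < t < 1`, and the ball contributes at least
`e^{-1} / 4` to the norm. The integrals in the norm are Bochner integrals, so this lower bound
also needs joint measurability of the heat extension (`stronglyMeasurable_heatExt`).
-/

open MeasureTheory Metric Filter Topology ENNReal

noncomputable section

abbrev Ed (d : ℕ) : Type := EuclideanSpace ℝ (Fin d)

/-- Heat extension `e^{tΔ}f`. -/
def heatExt {d : ℕ} {E : Type*} [NormedAddCommGroup E] [NormedSpace ℝ E]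
    (t : ℝ) (f : Ed d → E) (x : Ed d) : E :=
  ((4 * Real.pi * t) ^ (-(d : ℝ) / 2)) •
    ∫ y : Ed d, Real.exp (-‖x - y‖ ^ 2 / (4 * t)) • f y

/-- The `∂BMO` norm. -/
def dBMONorm {d : ℕ} {E : Type*} [NormedAddCommGroup E] [NormedSpace ℝ E]
    (f : Ed d → E) : ℝ≥0∞ :=
  ⨆ (x : Ed d) (R : ℝ) (_ : 0 < R),
    ENNReal.ofReal (Real.sqrt (∫ t in Set.Ioo (0 : ℝ) (R ^ 2),
      ⨍ y in ball x R, ‖heatExt t f y‖ ^ 2))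

/-- The `BMO` norm (via the heat extension). -/
def BMONorm {d : ℕ} (f : Ed d → ℝ) : ℝ≥0∞ :=
  ⨆ (x : Ed d) (R : ℝ) (_ : 0 < R),
    ENNReal.ofReal (Real.sqrt (∫ t in Set.Ioo (0 : ℝ) (R ^ 2),
      ⨍ y in ball x R, ‖fderiv ℝ (heatExt t f) y‖ ^ 2))

/-! ### Gaussian integrals and the heat flow of `sin` -/

lemma integrable_exp_neg_norm_sq {t : ℝ} (ht : 0 < t) (x : Ed 1) :
    Integrable (fun y : Ed 1 => Real.exp (-‖x - y‖ ^ 2 / (4 * t))) := by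
  have h : Integrable (fun v : Ed 1 => Real.exp (-‖v‖ ^ 2 / (4 * t))) := by
    have hb : 0 < ((1 / (4 * t) : ℝ) : ℂ).re := by
      rw [Complex.ofReal_re]; positivity
    have := (GaussianFourier.integrable_cexp_neg_mul_sq_norm_add hb 0 (0 : Ed 1)).norm
    refine this.congr (ae_of_all _ fun v => ?_)
    simp only [Complex.norm_exp]
    congr 1
    have : (-((1 / (4 * t) : ℝ) : ℂ) * (‖v‖ : ℂ) ^ 2 + 0 * ((inner ℝ (0 : Ed 1) v : ℝ) : ℂ))
        = ((-‖v‖ ^ 2 / (4 * t) : ℝ) : ℂ) := by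
      push_cast; ring
    rw [this, Complex.ofReal_re]
  exact h.comp_sub_left x

lemma integral_exp_neg_norm_sq {t : ℝ} (ht : 0 < t) (x : Ed 1) :
    ∫ y : Ed 1, Real.exp (-‖x - y‖ ^ 2 / (4 * t)) = (4 * Real.pi * t) ^ (1 / 2 : ℝ) := by
  rw [integral_sub_left_eq_self (fun v : Ed 1 => Real.exp (-‖v‖ ^ 2 / (4 * t))) volume x]
  have := GaussianFourier.integral_rexp_neg_mul_sq_norm (V := Ed 1)
    (b := 1 / (4 * t)) (by positivity)
  rw [finrank_euclideanSpace_fin] at this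
  convert this using 3
  · ring_nf
  · field_simp
  · simp

lemma integrable_heat {t : ℝ} (ht : 0 < t) {f : Ed 1 → ℝ} (hf : Measurable f) {M : ℝ}
    (hM : ∀ x, |f x| ≤ M) (x : Ed 1) :
    Integrable (fun y : Ed 1 => Real.exp (-‖x - y‖ ^ 2 / (4 * t)) • f y) :=
  (integrable_exp_neg_norm_sq ht x).mul_bdd hf.aestronglyMeasurable (ae_of_all _ hM)

/-- `sin` is an eigenfunction of the heat flow: this is the value of the Fourier transform of the
Gaussian at frequency `1`. -/
lemma heatExt_sin {t : ℝ} (ht : 0 < t) (x : Ed 1) :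
    heatExt t (fun y : Ed 1 => Real.sin (y 0)) x = Real.exp (-t) * Real.sin (x 0) := by
  set w : Ed 1 := EuclideanSpace.single 0 1 with hw
  have hwv : ∀ v : Ed 1, inner ℝ w v = v 0 := fun v => by
    simp [hw, EuclideanSpace.inner_single_left]
  have hwn : ‖w‖ = 1 := by simp [hw]
  have hb : 0 < ((1 / (4 * t) : ℝ) : ℂ).re := by
    rw [Complex.ofReal_re]; positivity
  have hI := GaussianFourier.integrable_cexp_neg_mul_sq_norm_add hb (-Complex.I) w
  have hE := GaussianFourier.integral_cexp_neg_mul_sq_norm_add hb (-Complex.I) w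
  have key : ∀ y : Ed 1, Real.exp (-‖x - y‖ ^ 2 / (4 * t)) • Real.sin (y 0)
      = RCLike.im (Complex.exp (Complex.I * (x 0 : ℝ)) *
        Complex.exp (-((1 / (4 * t) : ℝ) : ℂ) * (‖x - y‖ : ℂ) ^ 2
          + -Complex.I * ((inner ℝ w (x - y) : ℝ) : ℂ))) := by
    intro y
    rw [hwv, ← Complex.exp_add]
    have : Complex.I * ((x 0 : ℝ) : ℂ) + (-((1 / (4 * t) : ℝ) : ℂ) * (‖x - y‖ : ℂ) ^ 2
          + -Complex.I * (((x - y) 0 : ℝ) : ℂ))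
        = ((-‖x - y‖ ^ 2 / (4 * t) : ℝ) : ℂ) + ((y 0 : ℝ) : ℂ) * Complex.I := by
      simp only [PiLp.sub_apply]; push_cast; ring
    rw [this]
    simp only [RCLike.im_to_complex, Complex.exp_im, Complex.add_re, Complex.add_im,
      Complex.ofReal_re, Complex.ofReal_im, Complex.re_ofReal_mul, Complex.im_ofReal_mul,
      Complex.I_re, Complex.I_im, mul_zero, mul_one, add_zero, zero_add, smul_eq_mul]
  have hint : ∫ y : Ed 1, Real.exp (-‖x - y‖ ^ 2 / (4 * t)) • Real.sin (y 0)
      = (4 * Real.pi * t) ^ (1 / 2 : ℝ) * (Real.exp (-t) * Real.sin (x 0)) := by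
    simp_rw [key]
    rw [integral_im ((hI.comp_sub_left x).const_mul _), integral_const_mul,
      integral_sub_left_eq_self (fun v : Ed 1 => Complex.exp (-((1 / (4 * t) : ℝ) : ℂ)
        * (‖v‖ : ℂ) ^ 2 + -Complex.I * ((inner ℝ w v : ℝ) : ℂ))) volume x, hE, hwn,
      finrank_euclideanSpace_fin]
    have h1 : ((Real.pi : ℂ) / ((1 / (4 * t) : ℝ) : ℂ)) ^ (((1 : ℕ) : ℂ) / 2)
        = (((4 * Real.pi * t) ^ (1 / 2 : ℝ) : ℝ) : ℂ) := by
      rw [Complex.ofReal_cpow (by positivity)]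
      congr 1
      · push_cast; field_simp
      · simp
    have h2 : (-Complex.I) ^ 2 * (((1 : ℝ) : ℂ)) ^ 2 / (4 * ((1 / (4 * t) : ℝ) : ℂ))
        = ((-t : ℝ) : ℂ) := by
      have : (t : ℂ) ≠ 0 := by exact_mod_cast ht.ne'
      push_cast
      field_simp
      simp
    rw [h1, h2, ← Complex.ofReal_exp, ← Complex.ofReal_mul, mul_comm Complex.I]
    simp only [RCLike.im_to_complex, Complex.im_mul_ofReal, Complex.exp_ofReal_mul_I_im]
    ring
  rw [heatExt, hint, smul_eq_mul, ← mul_assoc, ← Real.rpow_add (by positivity)]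
  norm_num

lemma heatExt_sub {t : ℝ} (ht : 0 < t) {f g : Ed 1 → ℝ} (hf : Measurable f) (hg : Measurable g)
    {M N : ℝ} (hM : ∀ x, |f x| ≤ M) (hN : ∀ x, |g x| ≤ N) (x : Ed 1) :
    heatExt t (fun y => f y - g y) x = heatExt t f x - heatExt t g x := by
  simp only [heatExt, smul_sub]
  rw [integral_sub (integrable_heat ht hf hM x) (integrable_heat ht hg hN x), smul_sub]

/-! ### Decay under the heat flow -/

/-- For times in `(0, 1]` the heat flow preserves decay of order one, with uniform constants. -/
lemma abs_heatExt_le_of_decay {t : ℝ} (ht : 0 < t) (ht1 : t ≤ 1) {f : Ed 1 → ℝ} {C : ℝ}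
    (hC : ∀ x, (1 + ‖x‖) * |f x| ≤ C) (x : Ed 1) :
    |heatExt t f x| ≤ 4 * C / (1 + ‖x‖) := by
  have hC0 : 0 ≤ C := le_trans (by positivity) (hC 0)
  have hx : 0 < 1 + ‖x‖ := by positivity
  -- half of the Gaussian exponent absorbs the weight `1 + ‖x - y‖`
  have hpt : ∀ y : Ed 1, ‖Real.exp (-‖x - y‖ ^ 2 / (4 * t)) • f y‖
      ≤ 2 * C / (1 + ‖x‖) * Real.exp (-‖x - y‖ ^ 2 / (4 * (2 * t))) := by
    intro y
    have htri : 1 + ‖x‖ ≤ (1 + ‖x - y‖) * (1 + ‖y‖) := by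
      have := norm_le_norm_sub_add x y
      nlinarith [mul_nonneg (norm_nonneg (x - y)) (norm_nonneg y)]
    have hexp : 1 + ‖x - y‖ ≤ 2 * Real.exp (‖x - y‖ ^ 2 / (8 * t)) := by
      have h1 : ‖x - y‖ ^ 2 / 8 ≤ ‖x - y‖ ^ 2 / (8 * t) := by
        apply div_le_div_of_nonneg_left (by positivity) (by positivity); linarith
      have h2 := Real.add_one_le_exp (‖x - y‖ ^ 2 / (8 * t))
      nlinarith [sq_nonneg (‖x - y‖ - 2)]
    have hsplit : Real.exp (-‖x - y‖ ^ 2 / (4 * t)) * Real.exp (‖x - y‖ ^ 2 / (8 * t))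
        = Real.exp (-‖x - y‖ ^ 2 / (4 * (2 * t))) := by
      rw [← Real.exp_add]; congr 1; field_simp; ring
    have hf : (1 + ‖x‖) * |f y| ≤ (2 * Real.exp (‖x - y‖ ^ 2 / (8 * t))) * C := calc
      (1 + ‖x‖) * |f y| ≤ ((1 + ‖x - y‖) * (1 + ‖y‖)) * |f y| := by gcongr
      _ = (1 + ‖x - y‖) * ((1 + ‖y‖) * |f y|) := by ring
      _ ≤ _ := by gcongr; exact hC y
    rw [norm_smul, Real.norm_eq_abs, Real.norm_eq_abs, Real.abs_exp, ← hsplit,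
      div_mul_eq_mul_div, le_div_iff₀ hx]
    calc Real.exp (-‖x - y‖ ^ 2 / (4 * t)) * |f y| * (1 + ‖x‖)
        = Real.exp (-‖x - y‖ ^ 2 / (4 * t)) * ((1 + ‖x‖) * |f y|) := by ring
      _ ≤ Real.exp (-‖x - y‖ ^ 2 / (4 * t)) * ((2 * Real.exp (‖x - y‖ ^ 2 / (8 * t))) * C) := by
        gcongr
      _ = _ := by ring
  have hI := norm_integral_le_of_norm_le
    ((integrable_exp_neg_norm_sq (t := 2 * t) (by positivity) x).const_mul (2 * C / (1 + ‖x‖)))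
    (ae_of_all _ hpt)
  rw [integral_const_mul, integral_exp_neg_norm_sq (by positivity)] at hI
  have h2 : (2 : ℝ) ^ (1 / 2 : ℝ) ≤ 2 := by
    calc (2 : ℝ) ^ (1 / 2 : ℝ) ≤ 2 ^ (1 : ℝ) :=
          Real.rpow_le_rpow_of_exponent_le (by norm_num) (by norm_num)
      _ = 2 := Real.rpow_one 2
  have hA : 0 < 4 * Real.pi * t := by positivity
  have hcancel : (4 * Real.pi * t) ^ (-((1 : ℕ) : ℝ) / 2) * (4 * Real.pi * (2 * t)) ^ (1 / 2 : ℝ)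
      = 2 ^ (1 / 2 : ℝ) := by
    rw [show 4 * Real.pi * (2 * t) = (4 * Real.pi * t) * 2 by ring,
      Real.mul_rpow hA.le (by norm_num), ← mul_assoc, ← Real.rpow_add hA]
    norm_num
  rw [heatExt, ← Real.norm_eq_abs, norm_smul, Real.norm_of_nonneg (by positivity)]
  calc _ ≤ (4 * Real.pi * t) ^ (-((1 : ℕ) : ℝ) / 2) *
        (2 * C / (1 + ‖x‖) * (4 * Real.pi * (2 * t)) ^ (1 / 2 : ℝ)) := by gcongr
    _ = 2 * C / (1 + ‖x‖) * ((4 * Real.pi * t) ^ (-((1 : ℕ) : ℝ) / 2)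
        * (4 * Real.pi * (2 * t)) ^ (1 / 2 : ℝ)) := by ring
    _ ≤ 2 * C / (1 + ‖x‖) * 2 := by rw [hcancel]; gcongr
    _ = _ := by ring

/-! ### Measurability and averages -/

lemma stronglyMeasurable_heatExt {f : Ed 1 → ℝ} (hf : Measurable f) :
    StronglyMeasurable (fun p : ℝ × Ed 1 => heatExt p.1 f p.2) := by
  have h : StronglyMeasurable (fun q : (ℝ × Ed 1) × Ed 1 =>
      Real.exp (-‖q.1.2 - q.2‖ ^ 2 / (4 * q.1.1)) • f q.2) := by
    apply Measurable.stronglyMeasurable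
    fun_prop
  have h1 : StronglyMeasurable (fun p : ℝ × Ed 1 =>
      (4 * Real.pi * p.1) ^ (-((1 : ℕ) : ℝ) / 2)) := by
    apply Measurable.stronglyMeasurable
    fun_prop
  exact h1.smul h.integral_prod_right'

lemma stronglyMeasurable_setAverage_heatExt {f : Ed 1 → ℝ} (hf : Measurable f)
    (s : Set (Ed 1)) :
    StronglyMeasurable (fun t : ℝ => ⨍ y in s, ‖heatExt t f y‖ ^ 2) := by
  simp only [setAverage_eq]
  exact StronglyMeasurable.const_smul
    ((stronglyMeasurable_heatExt hf).norm.pow 2).integral_prod_right' (volume.real s)⁻¹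

lemma integrableOn_heatExt_sq {f : Ed 1 → ℝ} (hf : Measurable f) {t K : ℝ} {x : Ed 1} {R : ℝ}
    (hK : ∀ y ∈ ball x R, |heatExt t f y| ≤ K) :
    IntegrableOn (fun y => ‖heatExt t f y‖ ^ 2) (ball x R) := by
  refine Measure.integrableOn_of_bounded (M := K ^ 2) measure_ball_lt_top.ne ?_ ?_
  · exact (((stronglyMeasurable_heatExt hf).comp_measurable
      measurable_prodMk_left).norm.pow 2).aestronglyMeasurable
  · refine (ae_restrict_iff' measurableSet_ball).2 (ae_of_all _ fun y hy => ?_)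
    rw [norm_pow, norm_norm, Real.norm_eq_abs]
    exact pow_le_pow_left₀ (abs_nonneg _) (hK y hy) 2

lemma setAverage_heatExt_nonneg (f : Ed 1 → ℝ) (t : ℝ) (s : Set (Ed 1)) :
    0 ≤ ⨍ y in s, ‖heatExt t f y‖ ^ 2 := by
  rw [setAverage_eq]
  exact mul_nonneg (by positivity) (integral_nonneg fun y => by positivity)

lemma setAverage_heatExt_le {f : Ed 1 → ℝ} (hf : Measurable f) {t K : ℝ} {x : Ed 1} {R : ℝ}
    (hR : 0 < R) (hK : ∀ y ∈ ball x R, |heatExt t f y| ≤ K) :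
    ⨍ y in ball x R, ‖heatExt t f y‖ ^ 2 ≤ K ^ 2 := by
  obtain ⟨y, hy, h⟩ := exists_setAverage_le (measure_ball_pos volume x hR).ne'
    measure_ball_lt_top.ne (integrableOn_heatExt_sq hf hK)
  exact h.trans (pow_le_pow_left₀ (norm_nonneg _) (hK y hy) 2)

/-! ### Bounds on the norm -/

lemma dBMONorm_sin_lt_top : dBMONorm (fun x : Ed 1 => Real.sin (x 0)) < ⊤ := by
  have hsin : Measurable (fun x : Ed 1 => Real.sin (x 0)) := by fun_prop
  refine lt_of_le_of_lt (iSup_le fun x => iSup_le fun R => iSup_le fun hR => ?_)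
    (ENNReal.ofReal_lt_top (r := 1))
  refine ENNReal.ofReal_le_ofReal (Real.sqrt_le_one.2 ?_)
  have hexp : IntegrableOn (fun t : ℝ => Real.exp (-t)) (Set.Ioi 0) := by
    simpa using integrableOn_exp_mul_Ioi (a := -1) (by norm_num) 0
  calc _ ≤ ∫ t in Set.Ioo (0 : ℝ) (R ^ 2), Real.exp (-t) := by
        refine integral_mono_of_nonneg
          (ae_of_all _ fun t => setAverage_heatExt_nonneg _ t _)
          (hexp.mono_set Set.Ioo_subset_Ioi_self)
          ((ae_restrict_iff' measurableSet_Ioo).2 (ae_of_all _ fun t ht => ?_))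
        refine (setAverage_heatExt_le hsin (K := Real.exp (-t)) hR fun y _ => ?_).trans ?_
        · rw [heatExt_sin ht.1, abs_mul, Real.abs_exp]
          exact mul_le_of_le_one_right (Real.exp_nonneg _) (Real.abs_sin_le_one _)
        · exact pow_le_of_le_one (Real.exp_nonneg _)
            (Real.exp_le_one_iff.2 (by linarith [ht.1])) two_ne_zero
    _ ≤ ∫ t in Set.Ioi (0 : ℝ), Real.exp (-t) :=
        setIntegral_mono_set hexp (ae_of_all _ fun t => Real.exp_nonneg _)
          Set.Ioo_subset_Ioi_self.eventuallyLE
    _ = 1 := by rw [integral_exp_neg_Ioi]; simp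

/-- A pointwise lower bound on the space-time cylinder over a unit ball bounds the norm below.
The upper bound `K` only serves to make the Bochner integrals in the norm meaningful. -/
lemma le_dBMONorm {f : Ed 1 → ℝ} (hf : Measurable f) {x : Ed 1} {c K : ℝ} (hc : 0 ≤ c)
    (hlow : ∀ t ∈ Set.Ioo (0 : ℝ) 1, ∀ y ∈ ball x 1, c ≤ |heatExt t f y|)
    (hup : ∀ t ∈ Set.Ioo (0 : ℝ) 1, ∀ y ∈ ball x 1, |heatExt t f y| ≤ K) :
    ENNReal.ofReal c ≤ dBMONorm f := by
  refine le_trans ?_ (le_iSup_of_le x (le_iSup_of_le (1 : ℝ) (le_iSup_of_le one_pos le_rfl)))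
  refine ENNReal.ofReal_le_ofReal (Real.le_sqrt_of_sq_le ?_)
  rw [one_pow]
  have havg : ∀ t ∈ Set.Ioo (0 : ℝ) 1, c ^ 2 ≤ ⨍ y in ball x 1, ‖heatExt t f y‖ ^ 2 := by
    intro t ht
    obtain ⟨y, hy, h⟩ := exists_le_setAverage (measure_ball_pos volume x one_pos).ne'
      measure_ball_lt_top.ne (integrableOn_heatExt_sq hf (hup t ht))
    exact (pow_le_pow_left₀ hc (hlow t ht y hy) 2).trans h
  have hint : IntegrableOn (fun t : ℝ => ⨍ y in ball x 1, ‖heatExt t f y‖ ^ 2)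
      (Set.Ioo 0 1) := by
    refine Measure.integrableOn_of_bounded (M := K ^ 2) (by simp)
      (stronglyMeasurable_setAverage_heatExt hf _).aestronglyMeasurable
      ((ae_restrict_iff' measurableSet_Ioo).2 (ae_of_all _ fun t ht => ?_))
    rw [Real.norm_of_nonneg (setAverage_heatExt_nonneg f t _)]
    exact setAverage_heatExt_le hf one_pos (hup t ht)
  calc c ^ 2 = ∫ _ in Set.Ioo (0 : ℝ) 1, c ^ 2 := by simp
    _ ≤ _ := setIntegral_mono_on (by simp) hint measurableSet_Ioo havg

lemma SchwartzMap.exists_decay_one (φ : SchwartzMap (Ed 1) ℝ) :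
    ∃ C, ∀ x, (1 + ‖x‖) * |φ x| ≤ C := by
  obtain ⟨A, -, hA⟩ := φ.decay 0 0
  obtain ⟨B, -, hB⟩ := φ.decay 1 0
  refine ⟨A + B, fun x => ?_⟩
  have h1 := hA x
  have h2 := hB x
  simp only [norm_iteratedFDeriv_zero, Real.norm_eq_abs, pow_zero, pow_one, one_mul] at h1 h2
  linarith

/-- `sin` has finite `∂BMO` norm on `ℝ`, but is not in the closure of the Schwartz
class in `∂BMO`. -/
theorem stmt17 :
    dBMONorm (fun x : Ed 1 => Real.sin (x 0)) < ⊤ ∧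
    ∃ ε > (0 : ℝ), ∀ φ : SchwartzMap (Ed 1) ℝ,
      ENNReal.ofReal ε ≤ dBMONorm (fun x : Ed 1 => Real.sin (x 0) - φ x) := by
  refine ⟨dBMONorm_sin_lt_top, Real.exp (-1) / 4, by positivity, fun φ => ?_⟩
  obtain ⟨C, hC⟩ := φ.exists_decay_one
  have hC0 : 0 ≤ C := le_trans (by positivity) (hC 0)
  have hsin : Measurable (fun x : Ed 1 => Real.sin (x 0)) := by fun_prop
  have hφ : Measurable (fun x : Ed 1 => φ x) := φ.continuous.measurable
  have hφC : ∀ x, |φ x| ≤ C := fun x => by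
    have := hC x
    nlinarith [mul_nonneg (norm_nonneg x) (abs_nonneg (φ x))]
  have hsub : ∀ t : ℝ, 0 < t → ∀ y : Ed 1, heatExt t (fun x : Ed 1 => Real.sin (x 0) - φ x) y
      = Real.exp (-t) * Real.sin (y 0) - heatExt t (fun x => φ x) y := fun t ht y => by
    rw [heatExt_sub ht hsin hφ (fun x => Real.abs_sin_le_one _) hφC, heatExt_sin ht]
  obtain ⟨n, hn⟩ := exists_nat_gt (4 * C / (Real.exp (-1) / 4))
  rw [div_lt_iff₀ (by positivity)] at hn
  set x : Ed 1 := EuclideanSpace.single 0 (Real.pi / 2 + n * (2 * Real.pi)) with hx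
  have hx0 : x 0 = Real.pi / 2 + n * (2 * Real.pi) := by simp [hx]
  have hcoord : ∀ y ∈ ball x 1, |y 0 - x 0| ≤ 1 := fun y hy => by
    have h1 := PiLp.norm_apply_le (y - x) 0
    rw [mem_ball, dist_eq_norm] at hy
    simp only [PiLp.sub_apply, Real.norm_eq_abs] at h1
    linarith
  have hsmall : ∀ t ∈ Set.Ioo (0 : ℝ) 1, ∀ y ∈ ball x 1,
      |heatExt t (fun x => φ x) y| ≤ Real.exp (-1) / 4 := fun t ht y hy => by
    refine (abs_heatExt_le_of_decay ht.1 ht.2.le hC y).trans ?_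
    have h1 := PiLp.norm_apply_le y 0
    have h2 := (abs_le.1 (hcoord y hy)).1
    have h3 := le_abs_self (y 0)
    rw [Real.norm_eq_abs] at h1
    have hny : (n : ℝ) ≤ 1 + ‖y‖ := by
      nlinarith [Real.pi_gt_three, (Nat.cast_nonneg n : (0 : ℝ) ≤ n)]
    rw [div_le_iff₀ (by positivity)]
    nlinarith [Real.exp_pos (-1)]
  refine le_dBMONorm (f := fun x : Ed 1 => Real.sin (x 0) - φ x) (x := x)
    (K := 1 + Real.exp (-1) / 4) (hsin.sub hφ) (by positivity)
    (fun t ht y hy => ?_) (fun t ht y hy => ?_)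
  · have hs : 1 / 2 ≤ Real.sin (y 0) := by
      have h1 : Real.sin (y 0) = Real.cos (y 0 - x 0) := by
        rw [hx0, ← sub_sub, Real.cos_sub_nat_mul_two_pi, Real.cos_sub_pi_div_two]
      have h2 := Real.one_sub_sq_div_two_le_cos (x := y 0 - x 0)
      have h3 := (sq_le_one_iff_abs_le_one _).2 (hcoord y hy)
      rw [h1]; linarith
    have he : Real.exp (-1) ≤ Real.exp (-t) := Real.exp_le_exp.2 (by linarith [ht.2])
    have hp := le_of_abs_le (hsmall t ht y hy)
    rw [hsub t ht.1]
    refine le_trans ?_ (le_abs_self _)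
    nlinarith [Real.exp_pos (-1)]
  · rw [hsub t ht.1]
    refine (abs_sub _ _).trans (add_le_add ?_ (hsmall t ht y hy))
    rw [abs_mul, Real.abs_exp]
    exact mul_le_one₀ (Real.exp_le_one_iff.2 (by linarith [ht.1])) (abs_nonneg _)
      (Real.abs_sin_le_one _)

end
end
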